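/- Let (X, L) be a random vector with values in ℝ × [0,∞) whose law has density h(x,l) = (1/√(2π))·(|x|+l)·exp(−(|x|+l)²/2) with respect to Lebesgue measure on ℝ × [0,∞). Then for every nonnegative measurable function f : ℝ → [0,∞], almost surely E[f(X/2) | σ(L)] = ∫_ℝ f(y)·(2|y| + L)·exp(−(2y² + 2|y|L)) dy. In particular, the conditional density of X/2 at the point y given L = l is (2|y|+l)·exp(−(2y² + 2|y|l)). -/

import Mathlib

open MeasureTheory ProbabilityTheory Real
open scoped ENNReal

/-- The joint density of `(B₁, L₁)`. -/
noncomputable def jointDensity (x l : ℝ) : ℝ :=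
  (1 / Real.sqrt (2 * π)) * (|x| + l) * Real.exp (-(|x| + l) ^ 2 / 2)

/-!
Bayes' formula reduces the theorem to an identity for each fixed `l ≥ 0`. Expanding the square in
`h(2y, l)` gives `2 h(2y, l) = c(l) q(l, y)`, where `c(l) = 2 / √(2π) · exp(-l² / 2)` and
`q(l, y) = (2|y| + l) exp(-(2y² + 2|y|l))`. Since `q(l, ·)` has total mass one, `c` is the density
of `L` and `q(l, ·)` is the conditional density of `X / 2` given `L = l`.
-/

section Bayes

variable {Ω α β : Type*} [MeasurableSpace Ω] [MeasurableSpace α] [MeasurableSpace β]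
  {P : Measure Ω} {μ : Measure α} {ν : Measure β} [SFinite μ] [SFinite ν]
  {X : Ω → α} {L : Ω → β} {h g : α × β → ℝ≥0∞}

theorem setLIntegral_preimage_of_map_prodMk_eq_withDensity (hX : Measurable X) (hL : Measurable L)
    (hh : Measurable h) (hlaw : P.map (fun ω => (X ω, L ω)) = (μ.prod ν).withDensity h)
    (hg : Measurable g) {t : Set β} (ht : MeasurableSet t) :
    ∫⁻ ω in L ⁻¹' t, g (X ω, L ω) ∂P = ∫⁻ l in t, ∫⁻ x, h (x, l) * g (x, l) ∂μ ∂ν := by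
  have ht' : MeasurableSet (Set.univ ×ˢ t : Set (α × β)) := MeasurableSet.univ.prod ht
  calc ∫⁻ ω in L ⁻¹' t, g (X ω, L ω) ∂P
      = ∫⁻ ω in (fun ω => (X ω, L ω)) ⁻¹' (Set.univ ×ˢ t), g (X ω, L ω) ∂P := by
        rw [Set.mk_preimage_prod, Set.preimage_univ, Set.univ_inter]
    _ = ∫⁻ p in Set.univ ×ˢ t, (h * g) p ∂μ.prod ν := by
        rw [← setLIntegral_map ht' hg (hX.prodMk hL), hlaw,
          setLIntegral_withDensity_eq_setLIntegral_mul _ hh hg ht']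
    _ = ∫⁻ l in t, ∫⁻ x, h (x, l) * g (x, l) ∂μ ∂ν := by
        rw [setLIntegral_prod_symm _ (hh.mul hg).aemeasurable, Measure.restrict_univ]
        rfl

/-- Bayes' formula `G l = (∫ h(x, l) g(x, l) dx) / ∫ h(x, l) dx`, multiplied out
because the marginal density of `L` may vanish. -/
theorem setLIntegral_eq_setLIntegral_comp_of_lintegral_density_mul_eq
    (hX : Measurable X) (hL : Measurable L)
    (hh : Measurable h) (hlaw : P.map (fun ω => (X ω, L ω)) = (μ.prod ν).withDensity h)
    (hg : Measurable g) {G : β → ℝ≥0∞} (hG : Measurable G)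
    (hGg : ∀ᵐ l ∂ν, ∫⁻ x, h (x, l) * g (x, l) ∂μ = (∫⁻ x, h (x, l) ∂μ) * G l)
    {s : Set Ω} (hs : MeasurableSet[MeasurableSpace.comap L inferInstance] s) :
    ∫⁻ ω in s, g (X ω, L ω) ∂P = ∫⁻ ω in s, G (L ω) ∂P := by
  obtain ⟨t, ht, rfl⟩ := hs
  calc ∫⁻ ω in L ⁻¹' t, g (X ω, L ω) ∂P
      = ∫⁻ l in t, ∫⁻ x, h (x, l) * g (x, l) ∂μ ∂ν :=
        setLIntegral_preimage_of_map_prodMk_eq_withDensity hX hL hh hlaw hg ht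
    _ = ∫⁻ l in t, ∫⁻ x, h (x, l) * G l ∂μ ∂ν := by
        refine lintegral_congr_ae (ae_restrict_of_ae ?_)
        filter_upwards [hGg] with l hl
        rw [hl, lintegral_mul_const _ (by fun_prop)]
    _ = ∫⁻ ω in L ⁻¹' t, G (L ω) ∂P :=
        (setLIntegral_preimage_of_map_prodMk_eq_withDensity (g := fun p => G p.2) hX hL hh hlaw
          (hG.comp measurable_snd) ht).symm

end Bayes

theorem ofReal_abs_mul_lintegral_comp_mul_left {a : ℝ} (ha : a ≠ 0) (g : ℝ → ℝ≥0∞) :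
    ENNReal.ofReal |a| * ∫⁻ y, g (a * y) = ∫⁻ x, g x := by
  conv_rhs => rw [← Real.smul_map_volume_mul_left ha]
  rw [lintegral_smul_measure, (measurableEmbedding_mulLeft₀ ha).lintegral_map, smul_eq_mul]

/-- The conditional density at `y` of `X / 2` given `L = l`, for `(X, L)` with density
`jointDensity`; the level `l` comes first, so that `sampledBridgeDensity l` is a density on `ℝ`
when `0 ≤ l`. -/
noncomputable def sampledBridgeDensity (l y : ℝ) : ℝ :=
  (2 * |y| + l) * Real.exp (-(2 * y ^ 2 + 2 * |y| * l))

theorem measurable_uncurry_jointDensity : Measurable (Function.uncurry jointDensity) := by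
  unfold Function.uncurry jointDensity
  fun_prop

theorem measurable_uncurry_sampledBridgeDensity :
    Measurable (Function.uncurry sampledBridgeDensity) := by
  unfold Function.uncurry sampledBridgeDensity
  fun_prop

theorem sampledBridgeDensity_nonneg {l : ℝ} (hl : 0 ≤ l) (y : ℝ) :
    0 ≤ sampledBridgeDensity l y := by
  unfold sampledBridgeDensity
  positivity

theorem hasDerivAt_neg_exp_neg_quadratic_div_two (l y : ℝ) :
    HasDerivAt (fun y => -Real.exp (-(2 * y ^ 2 + 2 * y * l)) / 2)
      ((2 * y + l) * Real.exp (-(2 * y ^ 2 + 2 * y * l))) y := by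
  have hquad : HasDerivAt (fun y => 2 * y ^ 2 + 2 * y * l) (4 * y + 2 * l) y := by
    refine (((hasDerivAt_pow 2 y).const_mul 2).add
      (((hasDerivAt_id' y).const_mul 2).mul_const l)).congr_deriv ?_
    norm_num
    ring
  refine (hquad.fun_neg.exp.fun_neg.div_const 2).congr_deriv ?_
  ring

theorem tendsto_neg_exp_neg_quadratic_div_two_atTop (l : ℝ) :
    Filter.Tendsto (fun y => -Real.exp (-(2 * y ^ 2 + 2 * y * l)) / 2) Filter.atTop (nhds 0) := by
  have hquad : Filter.Tendsto (fun y => 2 * y ^ 2 + 2 * y * l) Filter.atTop Filter.atTop := by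
    refine ((Filter.tendsto_id.const_mul_atTop two_pos).atTop_mul_atTop₀
      (Filter.tendsto_atTop_add_const_right _ l Filter.tendsto_id)).congr fun y => ?_
    simp only [id]
    ring
  simpa using (Real.tendsto_exp_neg_atTop_nhds_zero.comp hquad).neg.div_const 2

theorem integral_sampledBridgeDensity {l : ℝ} (hl : 0 ≤ l) :
    ∫ y, sampledBridgeDensity l y = 1 := by
  calc ∫ y, sampledBridgeDensity l y
      = 2 * ∫ y in Set.Ioi 0, (2 * y + l) * Real.exp (-(2 * y ^ 2 + 2 * y * l)) := by
        rw [← integral_comp_abs]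
        simp only [sampledBridgeDensity, sq_abs]
    _ = 2 * (0 - -Real.exp (-(2 * 0 ^ 2 + 2 * 0 * l)) / 2) := by
        rw [integral_Ioi_of_hasDerivAt_of_nonneg'
          (fun y _ => hasDerivAt_neg_exp_neg_quadratic_div_two l y)
          (fun y (hy : 0 < y) => by positivity) (tendsto_neg_exp_neg_quadratic_div_two_atTop l)]
    _ = 1 := by norm_num

theorem lintegral_sampledBridgeDensity {l : ℝ} (hl : 0 ≤ l) :
    ∫⁻ y, ENNReal.ofReal (sampledBridgeDensity l y) = 1 := by
  have hint : Integrable (sampledBridgeDensity l) :=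
    .of_integral_ne_zero (by simp [integral_sampledBridgeDensity hl])
  rw [← ofReal_integral_eq_lintegral_ofReal hint (ae_of_all _ (sampledBridgeDensity_nonneg hl)),
    integral_sampledBridgeDensity hl, ENNReal.ofReal_one]

theorem two_mul_jointDensity_two_mul (y l : ℝ) :
    2 * jointDensity (2 * y) l
      = 2 / Real.sqrt (2 * π) * Real.exp (-l ^ 2 / 2) * sampledBridgeDensity l y := by
  have habs : |2 * y| = 2 * |y| := by rw [abs_mul, abs_two]
  have hexp : Real.exp (-(2 * |y| + l) ^ 2 / 2)
      = Real.exp (-l ^ 2 / 2) * Real.exp (-(2 * y ^ 2 + 2 * |y| * l)) := by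
    rw [← Real.exp_add, ← sq_abs y]
    ring_nf
  rw [jointDensity, sampledBridgeDensity, habs, hexp]
  ring

theorem lintegral_jointDensity_mul_comp_half (f : ℝ → ℝ≥0∞) (l : ℝ) :
    ∫⁻ x, ENNReal.ofReal (jointDensity x l) * f (x / 2)
      = ENNReal.ofReal (2 / Real.sqrt (2 * π) * Real.exp (-l ^ 2 / 2)) *
        ∫⁻ y, f y * ENNReal.ofReal (sampledBridgeDensity l y) := by
  rw [← ofReal_abs_mul_lintegral_comp_mul_left two_ne_zero, abs_two,
    ← lintegral_const_mul' _ _ ENNReal.ofReal_ne_top,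
    ← lintegral_const_mul' _ _ ENNReal.ofReal_ne_top]
  refine lintegral_congr fun y => ?_
  rw [mul_div_cancel_left₀ y two_ne_zero, ← mul_assoc, ← ENNReal.ofReal_mul zero_le_two,
    two_mul_jointDensity_two_mul, ENNReal.ofReal_mul (by positivity), mul_assoc, mul_comm (f y)]

theorem lintegral_jointDensity {l : ℝ} (hl : 0 ≤ l) :
    ∫⁻ x, ENNReal.ofReal (jointDensity x l)
      = ENNReal.ofReal (2 / Real.sqrt (2 * π) * Real.exp (-l ^ 2 / 2)) := by
  simpa [lintegral_sampledBridgeDensity hl] using lintegral_jointDensity_mul_comp_half 1 l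

/-- If `(X, L)` has density `h(x,l)` (supported on `ℝ × [0,∞)`) with respect to Lebesgue
measure, then for every nonnegative measurable `f : ℝ → [0,∞]`, almost surely
`E[f(X/2) | σ(L)] = ∫ f(y) (2|y| + L) exp(-(2y² + 2|y|L)) dy`; that is, the (σ(L)-measurable)
function `ω ↦ ∫ f(y) (2|y| + L ω) exp(-(2y² + 2|y| L ω)) dy` is a version of the conditional
expectation of `f(X/2)` given `σ(L)`: it has the same integral on every `σ(L)`-measurable set.
In particular the conditional density of `X/2` at `y` given `L = l` is
`(2|y|+l)·exp(-(2y² + 2|y|l))`. -/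
theorem condExp_sampled_bridge_of_jointDensity {Ω : Type*} [MeasureSpace Ω]
    [IsProbabilityMeasure (ℙ : Measure Ω)]
    (X L : Ω → ℝ) (hX : Measurable X) (hL : Measurable L)
    (hlaw : Measure.map (fun ω => (X ω, L ω)) ℙ
      = (volume : Measure (ℝ × ℝ)).withDensity
          (fun p => ENNReal.ofReal (if 0 ≤ p.2 then jointDensity p.1 p.2 else 0)))
    (f : ℝ → ℝ≥0∞) (hf : Measurable f) :
    ∀ s : Set Ω, MeasurableSet[MeasurableSpace.comap L inferInstance] s →
      ∫⁻ ω in s, f (X ω / 2) ∂ℙ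
        = ∫⁻ ω in s,
            ∫⁻ y : ℝ, f y *
              ENNReal.ofReal ((2 * |y| + L ω) * Real.exp (-(2 * y ^ 2 + 2 * |y| * L ω))) ∂ℙ := by
  intro s hs
  have hdensity : Measurable fun p : ℝ × ℝ =>
      ENNReal.ofReal (if 0 ≤ p.2 then jointDensity p.1 p.2 else 0) :=
    (measurable_uncurry_jointDensity.ite (measurableSet_le measurable_const measurable_snd)
      measurable_const).ennreal_ofReal
  have hregression : Measurable fun l =>
      ∫⁻ y, f y * ENNReal.ofReal (sampledBridgeDensity l y) :=
    ((hf.comp measurable_snd).mul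
      measurable_uncurry_sampledBridgeDensity.ennreal_ofReal).lintegral_prod_right'
  refine setLIntegral_eq_setLIntegral_comp_of_lintegral_density_mul_eq
    (g := fun p => f (p.1 / 2)) hX hL hdensity hlaw (by fun_prop) hregression
    (ae_of_all _ fun l => ?_) hs
  by_cases hl : 0 ≤ l
  · simp only [hl, if_true]
    rw [lintegral_jointDensity_mul_comp_half, lintegral_jointDensity hl]
  · simp [hl]
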